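/- Let u be a negative integer, write v = -u with v ≥ 2, and suppose n ≥ max{14, 2v-1}. Assume the polynomial 𝓛_n^{(u)}(x) is irreducible over ℚ and that there exists a prime p with 2v - 3 < p < n - 2. Then the Galois group of 𝓛_n^{(u)}(x) over ℚ contains the alternating group A_n (i.e., the image of the Galois group acting on the n roots contains all even permutations of the roots). -/

import Mathlib

open Polynomial Finset

/-- The polynomial `𝓛_n^{(u)}(x) = ∑_{j=0}^n C(n,j) (∏_{i=j+1}^n (1+2(u+i))) xʲ`,
viewed as a polynomial over `ℚ` (it has integer coefficients). -/
noncomputable def lcal (n : ℕ) (u : ℤ) : Polynomial ℚ :=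
  ∑ j ∈ Finset.range (n + 1),
    Polynomial.C ((n.choose j : ℚ) * ∏ i ∈ Finset.Icc (j + 1) n, (1 + 2 * ((u : ℚ) + (i : ℚ))))
      * Polynomial.X ^ j

/-!
Bertrand's postulate, sharpened to give a prime in `(m, 2m - 3]`, allows us to enlarge the given
prime to a prime `p` with `n / 2 < p ≤ n - 3`. Let `a` be the index with `1 + 2(u + a) = p`. Among
the factors `1 + 2(u + i)`, `1 ≤ i ≤ n`, only those with `i = a` and `i = a + p`, namely `p` and
`3p`, are divisible by `p`, and neither is divisible by `p²`. Hence the `p`-adic Newton polygon of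
`𝓛_n^{(u)}` has an edge of slope `-1/p`: over `[a, a + p]` if `a + p ≤ n`, and over `[0, p]`
otherwise. Some root then has `p`-adic valuation `1/p`, so `p` divides a ramification index of the
splitting field, and with it the order of the Galois group `G`.

By Cauchy's theorem, `G` contains an element `g` of order `p`, which is a `p`-cycle as `n < 2p`.
Then `G` is primitive, and by Jordan's theorem it is transitive on `(n - p)`-tuples, so any
permutation `σ` of the points fixed by `g` extends to some `σx ∈ G`, where `x` permutes the support
of `g`. By Sylow's theorem `x` can be chosen to normalize `⟨g⟩`. The automorphisms of `⟨g⟩` commute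
and `⟨g⟩` is its own centralizer on its support, so the commutator of two such extensions `σx` and
`τy` differs from that of `σ` and `τ` by an element of `⟨g⟩ ≤ G`. When `σ` and `τ` are overlapping
transpositions, this puts a 3-cycle into `G`.
-/

section PrimeNumbers

theorem centralBinom_le_pow_sqrt_add_card_primes {n : ℕ} (hn : 2 < n) :
    n.centralBinom ≤
      (2 * n) ^ (Nat.sqrt (2 * n) - 1 + #{p ∈ Ioc n (2 * n) | p.Prime}) * 4 ^ (2 * n / 3) := by
  have hn0 : 0 < 2 * n := by lia
  set f : ℕ → ℕ := fun p ↦ p ^ n.centralBinom.factorization p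
  set P : Finset ℕ := {p ∈ range (2 * n + 1) | p.Prime}
  set big : ℕ → Prop := fun p ↦ p ≤ Nat.sqrt (2 * n) ∨ n < p
  have hP : ∏ p ∈ P, f p = n.centralBinom := by
    rw [← n.prod_pow_factorization_centralBinom]
    refine prod_filter_of_ne fun p _ hp ↦ ?_
    contrapose! hp
    simp [f, Nat.factorization_eq_zero_of_not_prime _ hp]
  have hbig : ∏ p ∈ P with big p, f p ≤
      (2 * n) ^ (Nat.sqrt (2 * n) - 1 + #{p ∈ Ioc n (2 * n) | p.Prime}) := by
    refine (prod_le_pow_card _ _ _ fun p _ ↦ Nat.pow_factorization_choose_le hn0).trans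
      (Nat.pow_le_pow_right hn0 ?_)
    -- `1` is not prime, which leaves room for one prime in `Ioc n (2 * n)`.
    have hIcc : Nat.sqrt (2 * n) - 1 = #(Icc 2 (Nat.sqrt (2 * n))) := by simp
    rw [hIcc]
    refine (card_le_card fun p hp ↦ ?_).trans (card_union_le _ _)
    simp only [P, big, mem_filter, mem_range, mem_union, mem_Icc, mem_Ioc] at hp ⊢
    have := hp.1.2.two_le
    grind
  have hsmall : ∏ p ∈ P with ¬ big p, f p ≤ 4 ^ (2 * n / 3) := by
    refine le_trans ?_ (primorial_le_four_pow (2 * n / 3))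
    have hle : ∀ p ∈ P.filter (¬ big ·), f p ≤ if p ≤ 2 * n / 3 then p else 1 := by
      intro p hp
      simp only [P, big, mem_filter, not_or, not_le, not_lt] at hp
      obtain ⟨⟨-, hpp⟩, hsqrt, hpn⟩ := hp
      split_ifs with h
      · exact (Nat.pow_le_pow_right hpp.pos
          (Nat.factorization_choose_le_one (Nat.sqrt_lt'.1 hsqrt))).trans (pow_one p).le
      · simp [f, Nat.factorization_centralBinom_of_two_mul_self_lt_three_mul hn hpn (by lia)]
    refine (prod_le_prod' hle).trans ?_
    rw [← prod_filter]
    refine prod_le_prod_of_subset_of_one_le' (fun p hp ↦ ?_) fun p hp _ ↦ ?_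
    · simp only [P, mem_filter, mem_range] at hp ⊢
      exact ⟨by lia, hp.1.1.2⟩
    · exact (mem_filter.1 hp).2.pos
  rw [← hP, ← prod_filter_mul_prod_filter_not P big]
  exact Nat.mul_le_mul hbig hsmall

theorem exists_prime_lt_and_add_three_le_two_mul_of_large {n : ℕ} (hn : 512 ≤ n) :
    ∃ p, p.Prime ∧ n < p ∧ p + 3 ≤ 2 * n := by
  by_contra! h
  have hcard : #{p ∈ Ioc n (2 * n) | p.Prime} ≤ 1 := by
    rw [← card_singleton (2 * n - 1)]
    refine card_le_card fun p hp ↦ mem_singleton.2 ?_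
    simp only [mem_filter, mem_Ioc] at hp
    obtain ⟨⟨hnp, hpn⟩, hpp⟩ := hp
    have := h p hpp hnp
    rcases hpp.eq_two_or_odd with h2 | hodd <;> lia
  have hsqrt : 1 ≤ Nat.sqrt (2 * n) := Nat.sqrt_pos.2 (by lia)
  apply (Nat.four_pow_lt_mul_centralBinom n (by lia)).not_ge
  calc n * n.centralBinom
      ≤ n * ((2 * n) ^ Nat.sqrt (2 * n) * 4 ^ (2 * n / 3)) := by
        grw [centralBinom_le_pow_sqrt_add_card_primes (by lia), hcard, Nat.sub_add_cancel hsqrt]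
        lia
    _ ≤ 4 ^ n := by grw [← mul_assoc, bertrand_main_inequality hn]

theorem exists_prime_lt_and_add_three_le_two_mul {n : ℕ} (hn : 4 ≤ n) :
    ∃ p, p.Prime ∧ n < p ∧ p + 3 ≤ 2 * n := by
  obtain hlarge | hsmall := le_or_gt 512 n
  · exact exists_prime_lt_and_add_three_le_two_mul_of_large hlarge
  have hprime : ∀ p ∈ [5, 7, 11, 19, 31, 59, 113, 223, 443, 631], p.Prime := by norm_num
  have hcover : ∃ p ∈ [5, 7, 11, 19, 31, 59, 113, 223, 443, 631], n < p ∧ p + 3 ≤ 2 * n := by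
    simp only [List.mem_cons, List.not_mem_nil, or_false, exists_eq_or_imp, exists_eq_left]
    omega
  obtain ⟨p, hp, hnp⟩ := hcover
  exact ⟨p, hprime p hp, hnp⟩

theorem not_sq_dvd_factorial_of_lt_two_mul {p n : ℕ} (hp : p.Prime) (hn : n < 2 * p) :
    ¬ p ^ 2 ∣ n.factorial := by
  have hlog : Nat.log p n < 2 := Nat.log_lt_of_lt_pow' two_ne_zero (by nlinarith [hp.two_le])
  have hdiv : n / p < 2 := Nat.div_lt_of_lt_mul (by omega)
  simpa [hp.pow_dvd_factorial_iff hlog] using hdiv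

end PrimeNumbers

section Group

open scoped commutatorElement

variable {G : Type*} [Group G]

theorem exists_conj_mem_zpowers_of_orderOf_eq_prime [Finite G] {p : ℕ} [Fact p.Prime]
    (hcard : ¬ p ^ 2 ∣ Nat.card G) {g h : G} (hg : orderOf g = p) (hh : orderOf h = p) :
    ∃ z : G, z * g * z⁻¹ ∈ Subgroup.zpowers h := by
  have hp : p.Prime := Fact.out
  have hfact : (Nat.card G).factorization p = 1 := by
    refine le_antisymm (not_lt.1 fun hlt ↦ hcard ?_) ?_
    · exact (hp.pow_dvd_iff_le_factorization Nat.card_pos.ne').2 hlt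
    · exact (hp.dvd_iff_one_le_factorization Nat.card_pos.ne').1 (hg ▸ orderOf_dvd_natCard g)
  have hzpowers {x : G} (hx : orderOf x = p) :
      Nat.card (Subgroup.zpowers x) = p ^ (Nat.card G).factorization p := by
    rw [Nat.card_zpowers, hx, hfact, pow_one]
  obtain ⟨z, hz⟩ := MulAction.exists_smul_eq G (Sylow.ofCard _ (hzpowers hg))
    (Sylow.ofCard _ (hzpowers hh))
  have hz' := congrArg (fun P : Sylow p G ↦ (P : Subgroup G)) hz
  simp only [Sylow.coe_subgroup_smul, Sylow.coe_ofCard] at hz'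
  rw [← hz']
  exact ⟨z, Subgroup.smul_mem_pointwise_smul g (MulAut.conj z) _ (Subgroup.mem_zpowers g)⟩

-- The automorphisms of the abelian group `zpowers g` commute with each other.
theorem commute_commutatorElement_of_conj_mem_zpowers {g x y : G}
    (hx : x⁻¹ * g * x ∈ Subgroup.zpowers g) (hy : y⁻¹ * g * y ∈ Subgroup.zpowers g) :
    Commute ⁅x, y⁆ g := by
  obtain ⟨i, hi⟩ := Subgroup.mem_zpowers_iff.1 hx
  obtain ⟨j, hj⟩ := Subgroup.mem_zpowers_iff.1 hy
  have conj_conj {a b : G} {k l : ℤ} (ha : g ^ k = a⁻¹ * g * a) (hb : g ^ l = b⁻¹ * g * b) :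
      (a * b)⁻¹ * g * (a * b) = g ^ (k * l) := by
    calc (a * b)⁻¹ * g * (a * b) = b⁻¹ * (a⁻¹ * g * a) * b := by group
      _ = (b⁻¹ * g * b) ^ k := by simpa [← ha] using (conj_zpow (a := b⁻¹) (b := g) (i := k)).symm
      _ = g ^ (k * l) := by rw [← hb, ← zpow_mul, mul_comm]
  have hxy : (x * y)⁻¹ * g * (x * y) = (y * x)⁻¹ * g * (y * x) := by
    rw [conj_conj hi hj, conj_conj hj hi, mul_comm]
  calc ⁅x, y⁆ * g = x * y * ((y * x)⁻¹ * g * (y * x)) * (y * x)⁻¹ := by group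
    _ = g * ⁅x, y⁆ := by rw [← hxy]; group

theorem commutatorElement_mul_mul_of_commute {a b x y : G} (hax : Commute a x) (hay : Commute a y)
    (hbx : Commute b x) (hby : Commute b y) : ⁅a * x, b * y⁆ = ⁅a, b⁆ * ⁅x, y⁆ := by
  have hinv : (a * x)⁻¹ * (b * y)⁻¹ = a⁻¹ * b⁻¹ * (x⁻¹ * y⁻¹) := by
    rw [hax.mul_inv, hby.mul_inv, hbx.symm.inv_inv.mul_mul_mul_comm]
  have hcomm : Commute (x * y) (a⁻¹ * b⁻¹) :=
    ((hax.inv_left.mul_left hbx.inv_left).mul_right (hay.inv_left.mul_left hby.inv_left)).symm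
  calc ⁅a * x, b * y⁆ = a * x * (b * y) * ((a * x)⁻¹ * (b * y)⁻¹) := (mul_assoc _ _ _)
    _ = a * b * (x * y) * (a⁻¹ * b⁻¹ * (x⁻¹ * y⁻¹)) := by rw [hinv, hbx.symm.mul_mul_mul_comm]
    _ = a * b * (a⁻¹ * b⁻¹) * (x * y * (x⁻¹ * y⁻¹)) := hcomm.mul_mul_mul_comm _ _
    _ = ⁅a, b⁆ * ⁅x, y⁆ := by simp only [commutatorElement_def, mul_assoc]

end Group

section PermSupport

open Equiv Equiv.Perm MulAction
open scoped commutatorElement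

variable {α : Type*} {G : Subgroup (Perm α)}

theorem exists_mem_forall_mem_eq_of_isMultiplyPretransitive {s : Finset α}
    (hG : IsMultiplyPretransitive G α #s) (σ : Perm α) : ∃ x ∈ G, ∀ y ∈ s, x y = σ y := by
  let e : Fin #s ↪ α := s.equivFin.symm.toEmbedding.trans (Function.Embedding.subtype _)
  obtain ⟨x, hx⟩ := hG.exists_smul_eq e (e.trans σ.toEmbedding)
  refine ⟨x, x.2, fun y hy ↦ ?_⟩
  simpa [e, Subgroup.smul_def] using DFunLike.congr_fun hx (s.equivFin ⟨y, hy⟩)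

theorem natCard_ofFixingSubgroup_compl (G : Subgroup (Perm α)) (s : Finset α) :
    Nat.card (SubMulAction.ofFixingSubgroup G (s : Set α)ᶜ) = #s := by
  have e : SubMulAction.ofFixingSubgroup G (s : Set α)ᶜ ≃ s :=
    Equiv.subtypeEquivRight fun x ↦ by simp [SubMulAction.mem_ofFixingSubgroup_iff]
  rw [Nat.card_congr e, Nat.card_eq_fintype_card, Fintype.card_coe]

variable [Fintype α] [DecidableEq α] {g : Perm α}

theorem mem_zpowers_of_commute_of_support_subset (hg : g.IsCycle) {h : Perm α}
    (hcomm : Commute h g) (hsupp : h.support ⊆ g.support) : h ∈ Subgroup.zpowers g := by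
  obtain ⟨hmem, hz⟩ := hg.commute_iff.1 hcomm
  rwa [ofSubtype_subtypePerm _ fun x hx ↦ hsupp (mem_support.2 hx)] at hz

theorem not_sq_dvd_card_of_support_subset {p : ℕ} (hp : p.Prime) {s : Finset α} (hs : #s = p)
    (hG : ∀ x ∈ G, x.support ⊆ s) : ¬ p ^ 2 ∣ Nat.card G := by
  intro hdvd
  have hle : G ≤ (ofSubtype : Perm {y // y ∈ s} →* Perm α).range := fun x hx ↦
    mem_range_ofSubtype_iff.2 (by exact_mod_cast hG x hx)
  have hcard : Nat.card (ofSubtype : Perm {y // y ∈ s} →* Perm α).range = p.factorial := by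
    rw [← Nat.card_congr (MonoidHom.ofInjective ofSubtype_injective).toEquiv, Nat.card_perm,
      Nat.card_eq_fintype_card, Fintype.card_coe, hs]
  exact not_sq_dvd_factorial_of_lt_two_mul hp (lt_mul_left hp.pos one_lt_two)
    (hdvd.trans (hcard ▸ Subgroup.card_dvd_of_le hle))

theorem exists_mul_mem_of_disjoint_of_isMultiplyPretransitive
    (hG : IsMultiplyPretransitive G α #g.supportᶜ) (hgG : g ∈ G) (hg : g.IsCycle)
    (hp : (#g.support).Prime) {σ : Perm α} (hσ : σ.Disjoint g) :
    ∃ x, x.support ⊆ g.support ∧ x⁻¹ * g * x ∈ Subgroup.zpowers g ∧ σ * x ∈ G := by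
  have : Fact (#g.support).Prime := ⟨hp⟩
  let K : Subgroup (Perm α) := (ofSubtype : Perm {y // y ∈ g.support} →* Perm α).range
  have mem_K (x : Perm α) : x ∈ K ↔ x.support ⊆ g.support :=
    mem_range_ofSubtype_iff.trans Finset.coe_subset
  have hgK : g ∈ K := (mem_K g).2 subset_rfl
  obtain ⟨x₀, hx₀G, hx₀⟩ := exists_mem_forall_mem_eq_of_isMultiplyPretransitive hG σ
  obtain ⟨y, rfl⟩ : ∃ y, x₀ = σ * y := ⟨σ⁻¹ * x₀, by group⟩
  have hyK : y ∈ K := (mem_K y).2 fun a ha ↦ by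
    by_contra hag
    exact mem_support.1 ha (σ.injective (hx₀ a (Finset.mem_compl.2 hag)))
  have hconj : y⁻¹ * g * y ∈ G ⊓ K := by
    refine ⟨?_, K.mul_mem (K.mul_mem (K.inv_mem hyK) hgK) hyK⟩
    have : y⁻¹ * g * y = (σ * y)⁻¹ * g * (σ * y) := by
      rw [mul_inv_rev, mul_assoc _ σ⁻¹ g, hσ.commute.inv_left.eq]; group
    exact this ▸ G.mul_mem (G.mul_mem (G.inv_mem hx₀G) hgG) hx₀G
  have hcard : ¬ (#g.support) ^ 2 ∣ Nat.card ↥(G ⊓ K) :=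
    not_sq_dvd_card_of_support_subset hp rfl fun x hx ↦ (mem_K x).1 hx.2
  have horder : orderOf (y⁻¹ * g * y) = #g.support :=
    hg.orderOf ▸ SemiconjBy.orderOf_eq y (by simp [SemiconjBy, mul_assoc])
  obtain ⟨z, hz⟩ := exists_conj_mem_zpowers_of_orderOf_eq_prime hcard
    (g := ⟨y⁻¹ * g * y, hconj⟩) (h := ⟨g, Subgroup.mem_inf.2 ⟨hgG, hgK⟩⟩)
    ((Subgroup.orderOf_mk _ _).trans horder) ((Subgroup.orderOf_mk _ _).trans hg.orderOf)
  refine ⟨y * (z : Perm α)⁻¹, (mem_K _).1 (K.mul_mem hyK (K.inv_mem z.2.2)), ?_, ?_⟩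
  · have := Subgroup.mem_map_of_mem (G ⊓ K).subtype hz
    rw [MonoidHom.map_zpowers] at this
    simpa [mul_assoc] using this
  · rw [← mul_assoc]
    exact G.mul_mem hx₀G (G.inv_mem z.2.1)

theorem commutatorElement_mem_of_disjoint_of_isMultiplyPretransitive
    (hG : IsMultiplyPretransitive G α #g.supportᶜ) (hgG : g ∈ G) (hg : g.IsCycle)
    (hp : (#g.support).Prime) {σ τ : Perm α} (hσ : σ.Disjoint g) (hτ : τ.Disjoint g) :
    ⁅σ, τ⁆ ∈ G := by
  obtain ⟨x, hxg, hx, hσx⟩ :=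
    exists_mul_mem_of_disjoint_of_isMultiplyPretransitive hG hgG hg hp hσ
  obtain ⟨y, hyg, hy, hτy⟩ :=
    exists_mul_mem_of_disjoint_of_isMultiplyPretransitive hG hgG hg hp hτ
  have hxy : ⁅x, y⁆ ∈ G := by
    refine Subgroup.zpowers_le.2 hgG (mem_zpowers_of_commute_of_support_subset hg
      (commute_commutatorElement_of_conj_mem_zpowers hx hy) ?_)
    grw [commutatorElement_def, support_mul_le, support_mul_le, support_mul_le, support_inv,
      support_inv, hxg, hyg]
    simp
  have hcomm {ρ w : Perm α} (hρ : ρ.Disjoint g) (hw : w.support ⊆ g.support) : Commute ρ w :=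
    (disjoint_iff_disjoint_support.2
      ((disjoint_iff_disjoint_support.1 hρ).mono_right hw)).commute
  have hmem : ⁅σ * x, τ * y⁆ ∈ G := (⁅(⟨_, hσx⟩ : G), (⟨_, hτy⟩ : G)⁆).2
  rw [commutatorElement_mul_mul_of_commute (hcomm hσ hxg) (hcomm hσ hyg) (hcomm hτ hxg)
    (hcomm hτ hyg)] at hmem
  exact (G.mul_mem_cancel_right hxy).1 hmem

theorem isPreprimitive_ofFixingSubgroup_compl_support (hgG : g ∈ G) (hg : g.IsCycle)
    (hp : (#g.support).Prime) :
    IsPreprimitive (fixingSubgroup G (g.support : Set α)ᶜ)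
      (SubMulAction.ofFixingSubgroup G (g.support : Set α)ᶜ) := by
  have := isPretransitive_of_isCycle_mem hg hgG
  exact IsPreprimitive.of_prime_card (natCard_ofFixingSubgroup_compl G g.support ▸ hp)

theorem alternatingGroup_le_of_isPreprimitive_of_isCycle_mem (hG : IsPreprimitive G α)
    (hgG : g ∈ G) (hg : g.IsCycle) (hp : (#g.support).Prime)
    (hcard : #g.support + 3 ≤ Fintype.card α) : alternatingGroup α ≤ G := by
  have hcompl : #g.supportᶜ = Fintype.card α - #g.support := card_compl _
  have htwo := hp.two_le
  have hmulti : IsMultiplyPretransitive G α #g.supportᶜ := by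
    have := isPreprimitive_ofFixingSubgroup_compl_support hgG hg hp
    have := (hG.isMultiplyPreprimitive (s := (g.support : Set α)ᶜ) (n := #g.supportᶜ - 1)
      (by rw [← Finset.coe_compl, Set.ncard_coe_finset]; lia)
      (by rw [Nat.card_eq_fintype_card]; lia) this).isMultiplyPretransitive
    exact isMultiplyPretransitive_of_le (n := #g.supportᶜ - 1 + 2) (by lia) (by simp; lia)
  obtain ⟨a, ha, b, hb, c, hc, hab, hac, hbc⟩ := Finset.two_lt_card.1
    (show 2 < #g.supportᶜ by lia)
  have hdisj {x y : α} (hx : x ∈ g.supportᶜ) (hy : y ∈ g.supportᶜ) : (swap x y).Disjoint g := by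
    rw [Finset.mem_compl] at hx hy
    intro z
    by_cases hz : z ∈ g.support
    · exact .inl (swap_apply_of_ne_of_ne (ne_of_mem_of_not_mem hz hx) (ne_of_mem_of_not_mem hz hy))
    · exact .inr (notMem_support.1 hz)
  have hmem := commutatorElement_mem_of_disjoint_of_isMultiplyPretransitive hmulti hgG hg hp
    (hdisj ha hb) (hdisj ha hc)
  have hcycle : IsThreeCycle ⁅swap a b, swap a c⁆ := by
    simpa [commutatorElement_def, mul_assoc] using
      (isThreeCycle_swap_mul_swap_same hab hac hbc).isThreeCycle_sq
  exact alternatingGroup_le_of_isPreprimitive_of_isThreeCycle_mem hG hcycle hmem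

theorem alternatingGroup_le_of_isPretransitive_of_prime_dvd_card (hG : IsPretransitive G α)
    {p : ℕ} (hp : p.Prime) (hpG : p ∣ Nat.card G) (hlt : Fintype.card α < 2 * p)
    (hle : p + 3 ≤ Fintype.card α) : alternatingGroup α ≤ G := by
  have : Fact p.Prime := ⟨hp⟩
  obtain ⟨⟨g, hgG⟩, horder⟩ := exists_prime_orderOf_dvd_card' p hpG
  rw [Subgroup.orderOf_mk] at horder
  have hg : g.IsCycle := isCycle_of_prime_order' (horder ▸ hp) (horder ▸ hlt)
  obtain rfl : #g.support = p := hg.orderOf.symm.trans horder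
  refine alternatingGroup_le_of_isPreprimitive_of_isCycle_mem ?_ hgG hg hp hle
  have := isPreprimitive_ofFixingSubgroup_compl_support hgG hg hp
  refine IsPreprimitive.of_card_lt
    (f := SubMulAction.ofFixingSubgroup_equivariantMap G (g.support : Set α)ᶜ) ?_
  rw [Nat.card_eq_fintype_card]
  refine hlt.trans_eq (congrArg (2 * ·) ?_)
  exact (natCard_ofFixingSubgroup_compl G g.support).symm.trans
    (Set.ncard_range_of_injective
      (SubMulAction.ofFixingSubgroup_equivariantMap_injective)).symm

end PermSupport

section NewtonPolygon

variable {R Γ₀ : Type*} [CommRing R] [LinearOrderedCommGroupWithZero Γ₀]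

/-- The weight `v (aⱼ) * γ ^ j` of the `j`-th term of a polynomial `∑ aⱼ X ^ j`. The vertices
`(j, -log v (aⱼ))` of the Newton polygon which lie on its supporting line of slope `log γ` are those
of maximal weight. -/
def newtonWeight (v : Valuation R Γ₀) (γ : Γ₀) (f : R[X]) (j : ℕ) : Γ₀ :=
  v (f.coeff j) * γ ^ j

/-- The index `k` is the only one of maximal weight, i.e. the supporting line of slope `log γ`
meets the Newton polygon of `f` in the single vertex of index `k`. -/
def IsStrictPeak (v : Valuation R Γ₀) (γ : Γ₀) (f : R[X]) (k : ℕ) : Prop :=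
  ∀ j, j ≠ k → newtonWeight v γ f j < newtonWeight v γ f k

/-- The maximal weight is attained at two different indices, i.e. the Newton polygon of `f` has an
edge of slope `log γ`. -/
def HasNewtonEdge (v : Valuation R Γ₀) (γ : Γ₀) (f : R[X]) : Prop :=
  ∃ k l, k ≠ l ∧ newtonWeight v γ f k = newtonWeight v γ f l ∧
    ∀ j, newtonWeight v γ f j ≤ newtonWeight v γ f k

variable {v : Valuation R Γ₀} {γ : Γ₀} {f g : R[X]} {k l : ℕ}

theorem HasNewtonEdge.not_isStrictPeak (hf : HasNewtonEdge v γ f) (m : ℕ) :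
    ¬ IsStrictPeak v γ f m := by
  obtain ⟨k, l, hkl, heq, hle⟩ := hf
  intro hm
  obtain hkm | hlm : m ≠ k ∨ m ≠ l := by lia
  · exact (hm k hkm.symm).not_ge (hle m)
  · exact (hm l hlm.symm).not_ge (heq ▸ hle m)

theorem IsStrictPeak.newtonWeight_pos (hf : IsStrictPeak v γ f k) : 0 < newtonWeight v γ f k :=
  zero_le.trans_lt (hf (k + 1) k.succ_ne_self)

theorem IsStrictPeak.newtonWeight_le (hf : IsStrictPeak v γ f k) (j : ℕ) :
    newtonWeight v γ f j ≤ newtonWeight v γ f k := by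
  obtain rfl | hj := eq_or_ne j k
  exacts [le_rfl, (hf j hj).le]

theorem IsStrictPeak.newtonWeight_mul_lt (hf : IsStrictPeak v γ f k) (hg : IsStrictPeak v γ g l)
    {i j : ℕ} (hij : i ≠ k ∨ j ≠ l) :
    newtonWeight v γ f i * newtonWeight v γ g j < newtonWeight v γ f k * newtonWeight v γ g l := by
  obtain hi | hj := hij
  · exact mul_lt_mul_of_lt_of_le_of_nonneg_of_pos (hf i hi) (hg.newtonWeight_le j) zero_le
      hg.newtonWeight_pos
  · exact mul_lt_mul_of_le_of_lt_of_nonneg_of_pos (hf.newtonWeight_le i) (hg j hj) zero_le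
      hf.newtonWeight_pos

theorem newtonWeight_mul_newtonWeight (v : Valuation R Γ₀) (γ : Γ₀) (f g : R[X]) (i j : ℕ) :
    newtonWeight v γ f i * newtonWeight v γ g j = v (f.coeff i * g.coeff j) * γ ^ (i + j) := by
  rw [newtonWeight, newtonWeight, map_mul, pow_add, mul_mul_mul_comm]

theorem IsStrictPeak.mul (hγ : γ ≠ 0) (hf : IsStrictPeak v γ f k) (hg : IsStrictPeak v γ g l) :
    IsStrictPeak v γ (f * g) (k + l) := by
  have hγ' (m : ℕ) : 0 < γ ^ m := pow_pos (zero_lt_iff.2 hγ) m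
  have hpeak : newtonWeight v γ (f * g) (k + l) = newtonWeight v γ f k * newtonWeight v γ g l := by
    have hlt : ∀ x ∈ antidiagonal (k + l) \ {(k, l)},
        v (f.coeff x.1 * g.coeff x.2) < v (f.coeff k * g.coeff l) := by
      intro x hx
      rw [mem_sdiff, HasAntidiagonal.mem_antidiagonal, mem_singleton, Prod.ext_iff,
        not_and_or] at hx
      have := hf.newtonWeight_mul_lt hg hx.2
      rwa [newtonWeight_mul_newtonWeight, newtonWeight_mul_newtonWeight, hx.1,
        mul_lt_mul_iff_left₀ (hγ' _)] at this
    rw [newtonWeight_mul_newtonWeight, newtonWeight, coeff_mul]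
    rw [v.map_sum_eq_of_lt (j := (k, l)) (by simp) hlt]
  intro m hm
  have hlt : v ((f * g).coeff m) <
      newtonWeight v γ f k * newtonWeight v γ g l / γ ^ m := by
    have hpos := mul_pos hf.newtonWeight_pos hg.newtonWeight_pos
    rw [coeff_mul]
    refine v.map_sum_lt (div_pos hpos (hγ' m)).ne' fun x hx ↦ (lt_div_iff₀ (hγ' m)).2 ?_
    rw [HasAntidiagonal.mem_antidiagonal] at hx
    have hx' : x.1 ≠ k ∨ x.2 ≠ l := by lia
    simpa only [newtonWeight_mul_newtonWeight, hx] using hf.newtonWeight_mul_lt hg hx'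
  exact hpeak ▸ (lt_div_iff₀ (hγ' m)).1 hlt

theorem isStrictPeak_C {c : R} (hc : v c ≠ 0) : IsStrictPeak v γ (C c) 0 := by
  intro j hj
  simp [newtonWeight, coeff_C_of_ne_zero hj, pos_iff_ne_zero, hc]

theorem exists_isStrictPeak_X_sub_C {a : R} (ha : v a ≠ γ) :
    ∃ k, IsStrictPeak v γ (X - C a) k := by
  have hzero {j : ℕ} (hj : j ≠ 0) (hj' : j ≠ 1) : (X - C a).coeff j = 0 := by
    rw [coeff_sub, coeff_X_of_ne_one hj', coeff_C_of_ne_zero hj, sub_zero]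
  obtain h | h := ha.lt_or_gt
  · refine ⟨1, fun j hj ↦ ?_⟩
    obtain rfl | hj' := eq_or_ne j 0
    · simpa [newtonWeight] using h
    · simpa [newtonWeight, hzero hj' hj] using zero_le.trans_lt h
  · refine ⟨0, fun j hj ↦ ?_⟩
    obtain rfl | hj' := eq_or_ne j 1
    · simpa [newtonWeight] using h
    · simpa [newtonWeight, hzero hj hj'] using zero_le.trans_lt h

theorem exists_isStrictPeak_multisetProd_X_sub_C (hγ : γ ≠ 0) {s : Multiset R}
    (hs : ∀ a ∈ s, v a ≠ γ) : ∃ k, IsStrictPeak v γ (s.map (X - C ·)).prod k := by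
  induction s using Multiset.induction_on with
  | empty => exact ⟨0, by simpa using isStrictPeak_C (v := v) (γ := γ) (c := 1) (by simp)⟩
  | cons a s ih =>
    rw [Multiset.forall_mem_cons] at hs
    obtain ⟨k, hk⟩ := exists_isStrictPeak_X_sub_C hs.1
    obtain ⟨l, hl⟩ := ih hs.2
    exact ⟨k + l, by simpa using hk.mul hγ hl⟩

theorem HasNewtonEdge.exists_mem_roots_valuation_eq {K : Type*} [Field K] {v : Valuation K Γ₀}
    {f : K[X]} (hedge : HasNewtonEdge v γ f) (hγ : γ ≠ 0) (hf0 : f ≠ 0) (hf : f.Splits) :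
    ∃ a ∈ f.roots, v a = γ := by
  by_contra! hroots
  obtain ⟨m, hm⟩ := exists_isStrictPeak_multisetProd_X_sub_C hγ hroots
  refine hedge.not_isStrictPeak (0 + m) ?_
  rw [hf.eq_prod_roots]
  exact (isStrictPeak_C (by simpa using hf0)).mul hγ hm

end NewtonPolygon

section Ramification

open IsDedekindDomain WithZero

theorem ramificationIdx'_dvd_natCard {A B : Type*} [CommRing A] [IsDomain A] [CommRing B]
    [IsDedekindDomain B] [Algebra A B] [Module.Finite A B] [Module.Flat A B] {p : Ideal A}
    [p.IsPrime] (hp : p ≠ ⊥) (P : Ideal B) [P.IsPrime] [P.LiesOver p] (G : Type*) [Group G]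
    [Finite G] [MulSemiringAction G B] [IsGaloisGroup G A B] :
    p.ramificationIdx' P ∣ Nat.card G := by
  rw [Ideal.ramificationIdx'_eq_ramificationIdx p P hp,
    ← Ideal.ramificationIdxIn_eq_ramificationIdx p P G,
    ← Ideal.ncard_primesOver_mul_ramificationIdxIn_mul_inertiaDegIn p B G]
  exact (dvd_mul_right _ _).mul_left _

/-- The power `v ^ e` of a valuation. Rescaling by `e` turns a Newton polygon slope with
denominator `e` into one which lies in the value group. -/
def powValuation {R Γ₀ : Type*} [CommRing R] [LinearOrderedCommGroupWithZero Γ₀]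
    (v : Valuation R Γ₀) {e : ℕ} (he : e ≠ 0) : Valuation R Γ₀ :=
  v.map (powMonoidWithZeroHom he) (pow_left_mono e)

theorem powValuation_apply {R Γ₀ : Type*} [CommRing R] [LinearOrderedCommGroupWithZero Γ₀]
    (v : Valuation R Γ₀) {e : ℕ} (he : e ≠ 0) (x : R) : powValuation v he x = v x ^ e :=
  rfl

theorem dvd_of_pow_eq_exp_pow {x : ℤᵐ⁰} {e r : ℕ} {d : ℤ} (he : e ≠ 0)
    (hed : IsCoprime (e : ℤ) d) (hx : x ^ e = exp d ^ r) : e ∣ r := by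
  have hx0 : x ≠ 0 := by
    rintro rfl
    exact pow_ne_zero r exp_ne_zero (hx.symm.trans (zero_pow he))
  rw [← exp_log hx0, ← exp_nsmul, ← exp_nsmul, exp_inj,
    nsmul_eq_mul, nsmul_eq_mul] at hx
  exact Int.natCast_dvd_natCast.1 (hed.dvd_of_dvd_mul_right (hx ▸ dvd_mul_right _ _))

variable {A K L : Type*} [CommRing A] [IsDedekindDomain A] [Field K] [Field L] [Algebra K L]
  [Algebra A K] [IsFractionRing A K]

theorem dvd_ramificationIdx'_of_hasNewtonEdge {B : Type*} [CommRing B] [IsDedekindDomain B]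
    [Algebra A B] [Module.IsTorsionFree A B] [Algebra A L] [IsScalarTower A K L] [Algebra B L]
    [IsFractionRing B L] [IsScalarTower A B L] (v : HeightOneSpectrum A) (w : HeightOneSpectrum B)
    [w.asIdeal.LiesOver v.asIdeal] {f : K[X]} (hf0 : f ≠ 0) (hf : (f.map (algebraMap K L)).Splits)
    {e : ℕ} {d : ℤ} (he : e ≠ 0) (hed : IsCoprime (e : ℤ) d)
    (hedge : HasNewtonEdge (powValuation (v.valuation K) he) (exp d) f) :
    e ∣ v.asIdeal.ramificationIdx' w.asIdeal := by
  set r := v.asIdeal.ramificationIdx' w.asIdeal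
  have hweight (j : ℕ) :
      newtonWeight (powValuation (w.valuation L) he) (exp d ^ r)
        (f.map (algebraMap K L)) j =
      newtonWeight (powValuation (v.valuation K) he) (exp d) f j ^ r := by
    rw [newtonWeight, newtonWeight, powValuation_apply, powValuation_apply, coeff_map,
      ← v.valuation_liesOver L w, mul_pow, pow_right_comm, pow_right_comm _ r j]
  have hedge_map : HasNewtonEdge (powValuation (w.valuation L) he) (exp d ^ r)
      (f.map (algebraMap K L)) := by
    obtain ⟨k, l, hkl, heq, hle⟩ := hedge
    refine ⟨k, l, hkl, by rw [hweight, hweight, heq], fun j ↦ ?_⟩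
    rw [hweight, hweight]
    exact pow_left_mono r (hle j)
  obtain ⟨a, -, ha⟩ := hedge_map.exists_mem_roots_valuation_eq
    (pow_ne_zero r exp_ne_zero) (map_ne_zero hf0) hf
  exact dvd_of_pow_eq_exp_pow he hed ha

variable [FiniteDimensional K L] [IsGalois K L]

theorem dvd_natCard_gal_of_hasNewtonEdge (v : HeightOneSpectrum A) {f : K[X]} (hf0 : f ≠ 0)
    (hf : (f.map (algebraMap K L)).Splits) {e : ℕ} {d : ℤ} (he : e ≠ 0)
    (hed : IsCoprime (e : ℤ) d)
    (hedge : HasNewtonEdge (powValuation (v.valuation K) he) (exp d) f) :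
    e ∣ Nat.card Gal(L/K) := by
  let : Algebra A L := ((algebraMap K L).comp (algebraMap A K)).toAlgebra
  have : IsScalarTower A K L := .of_algebraMap_eq fun _ ↦ rfl
  have := Module.IsTorsionFree.trans_faithfulSMul A K L
  let B := integralClosure A L
  have := IsIntegralClosure.isDedekindDomain A K L B
  have := IsIntegralClosure.finite A K L B
  have := IsIntegralClosure.isFractionRing_of_finite_extension A K L B
  let : MulSemiringAction Gal(L/K) B := IsIntegralClosure.MulSemiringAction A K L B
  have := IsGaloisGroup.of_isFractionRing Gal(L/K) A B K L
  obtain ⟨⟨P, _, _⟩⟩ := (inferInstance : Nonempty (v.asIdeal.primesOver B))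
  let w : HeightOneSpectrum B := ⟨P, ‹_›, Ideal.ne_bot_of_liesOver_of_ne_bot v.ne_bot P⟩
  have : w.asIdeal.LiesOver v.asIdeal := ‹_›
  exact (dvd_ramificationIdx'_of_hasNewtonEdge v w hf0 hf he hed hedge).trans
    (ramificationIdx'_dvd_natCard v.ne_bot w.asIdeal Gal(L/K))

theorem dvd_natCard_gal_of_separable_of_hasNewtonEdge (v : HeightOneSpectrum A) {f : K[X]}
    (hf : f.Separable) {e : ℕ} {d : ℤ} (he : e ≠ 0) (hed : IsCoprime (e : ℤ) d)
    (hedge : HasNewtonEdge (powValuation (v.valuation K) he) (exp d) f) :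
    e ∣ Nat.card f.Gal :=
  have : IsGalois K f.SplittingField := .of_separable_splitting_field hf
  dvd_natCard_gal_of_hasNewtonEdge v hf.ne_zero (SplittingField.splits f) he hed hedge

end Ramification

section Coefficients

open IsDedekindDomain WithZero

theorem exp_neg_one_le_one : (exp (-1) : ℤᵐ⁰) ≤ 1 :=
  exp_le_exp.2 (by simp)

theorem lcal_coeff (n : ℕ) (u : ℤ) (j : ℕ) : (lcal n u).coeff j =
    ((n.choose j * ∏ i ∈ Icc (j + 1) n, (1 + 2 * (u + (i : ℤ))) : ℤ) : ℚ) := by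
  rw [lcal, finsetSum_coeff]
  simp only [coeff_C_mul_X_pow]
  rw [sum_ite_eq]
  split_ifs with hj
  · push_cast
    rfl
  · rw [mem_range, not_lt, Nat.succ_le_iff] at hj
    simp [Nat.choose_eq_zero_of_lt hj]

theorem lcal_natDegree (n : ℕ) (u : ℤ) : (lcal n u).natDegree = n := by
  refine natDegree_eq_of_le_of_coeff_ne_zero ?_ (by simp [lcal_coeff])
  refine natDegree_le_iff_coeff_eq_zero.2 fun j hj ↦ ?_
  simp [lcal_coeff, Nat.choose_eq_zero_of_lt hj]

theorem not_dvd_choose_of_lt_two_mul {p n j : ℕ} (hp : p.Prime) (hn : n < 2 * p) (hjn : j ≤ n)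
    (hj : p ≤ j ∨ p ≤ n - j) : ¬ p ∣ n.choose j := by
  intro hchoose
  have hfac : p ∣ j.factorial * (n - j).factorial :=
    hp.dvd_mul.2 (hj.imp hp.dvd_factorial.2 hp.dvd_factorial.2)
  refine not_sq_dvd_factorial_of_lt_two_mul hp hn ?_
  rw [← Nat.choose_mul_factorial_mul_factorial hjn, mul_assoc, sq]
  exact mul_dvd_mul hchoose hfac

variable {p n a : ℕ} {u : ℤ} {v : HeightOneSpectrum ℤ}

theorem intValuation_of_odd (hp : p.Prime) (hp3 : 3 < p) (hv : v.asIdeal = Ideal.span {(p : ℤ)})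
    {m : ℤ} (hm : Odd m) (hlow : -p < m) (hhigh : m < 5 * p) :
    v.intValuation m = if m = p ∨ m = 3 * p then exp (-1) else 1 := by
  have hp0 : (p : ℤ) ≠ 0 := mod_cast hp.ne_zero
  have hvp : v.intValuation (p : ℤ) = exp (-1) := v.intValuation_singleton hp0 hv
  have hone {x : ℤ} (hx : ¬ (p : ℤ) ∣ x) : v.intValuation x = 1 := by
    rwa [HeightOneSpectrum.intValuation_eq_one_iff, hv, Ideal.mem_span_singleton]
  split_ifs with h
  · obtain rfl | rfl := h
    · exact hvp
    · have h3 : ¬ (p : ℤ) ∣ 3 := fun h ↦ by have := Int.le_of_dvd three_pos h; omega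
      rw [map_mul, hone h3, one_mul, hvp]
  · refine hone ?_
    rintro ⟨s, rfl⟩
    have hs_low : -1 < s := by nlinarith
    have hs_high : s < 5 := by nlinarith
    interval_cases s <;> grind

theorem intValuation_one_add_two_mul (hp : p.Prime) (hp3 : 3 < p)
    (hv : v.asIdeal = Ideal.span {(p : ℤ)}) (ha : 1 + 2 * (u + (a : ℤ)) = p) (hap : a ≤ p) {i : ℕ}
    (hi : 1 ≤ i) (hi' : i < a + 2 * p) :
    v.intValuation (1 + 2 * (u + (i : ℤ))) =
      (if i = a then exp (-1) else 1) * (if i = a + p then exp (-1) else 1) := by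
  rw [intValuation_of_odd hp hp3 hv ⟨u + i, add_comm _ _⟩ (by omega) (by omega)]
  split_ifs <;> first | rfl | omega

theorem intValuation_prod_one_add_two_mul (hp : p.Prime) (hp3 : 3 < p)
    (hv : v.asIdeal = Ideal.span {(p : ℤ)}) (ha : 1 + 2 * (u + (a : ℤ)) = p) (hap : a ≤ p)
    (hpn : p ≤ n) (hn : n < 2 * p) (j : ℕ) :
    v.intValuation (∏ i ∈ Icc (j + 1) n, (1 + 2 * (u + (i : ℤ)))) =
      exp (-1) ^ ((if j < a then 1 else 0) + if j < a + p ∧ a + p ≤ n then 1 else 0) := by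
  have hfactor : ∀ i ∈ Icc (j + 1) n, v.intValuation (1 + 2 * (u + (i : ℤ))) =
      (if i = a then exp (-1) else 1) * (if i = a + p then exp (-1) else 1) := fun i hi ↦ by
    rw [mem_Icc] at hi
    exact intValuation_one_add_two_mul hp hp3 hv ha hap (by omega) (by omega)
  rw [map_prod, prod_congr rfl hfactor, prod_mul_distrib, prod_ite_eq', prod_ite_eq', pow_add,
    pow_ite, pow_ite, pow_one, pow_zero]
  simp only [mem_Icc, Nat.succ_le_iff, hap.trans hpn, and_true]

theorem newtonWeight_lcal (hp : p.Prime) (hp3 : 3 < p)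
    (hv : v.asIdeal = Ideal.span {(p : ℤ)}) (ha : 1 + 2 * (u + (a : ℤ)) = p) (hap : a ≤ p)
    (hpn : p ≤ n) (hn : n < 2 * p) (j : ℕ) :
    newtonWeight (powValuation (v.valuation ℚ) hp.ne_zero) (exp (-1)) (lcal n u) j =
      v.intValuation (n.choose j) ^ p *
        exp (-1) ^ (((if j < a then p else 0) + if j < a + p ∧ a + p ≤ n then p else 0) + j) := by
  have hcoeff : (lcal n u).coeff j = algebraMap ℤ ℚ _ := lcal_coeff n u j
  rw [newtonWeight, powValuation_apply, hcoeff, v.valuation_of_algebraMap, map_mul,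
    intValuation_prod_one_add_two_mul hp hp3 hv ha hap hpn hn, mul_pow, mul_assoc, ← pow_mul,
    ← pow_add, add_mul, ite_mul, ite_mul, one_mul, zero_mul]

theorem intValuation_choose_eq_one (hp : p.Prime) (hv : v.asIdeal = Ideal.span {(p : ℤ)})
    (hn : n < 2 * p) {j : ℕ} (hjn : j ≤ n) (hj : p ≤ j ∨ p ≤ n - j) :
    v.intValuation (n.choose j : ℤ) = 1 := by
  rw [HeightOneSpectrum.intValuation_eq_one_iff, hv, Ideal.mem_span_singleton]
  exact_mod_cast not_dvd_choose_of_lt_two_mul hp hn hjn hj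

theorem intValuation_choose_le (hp : p.Prime) (hv : v.asIdeal = Ideal.span {(p : ℤ)}) (hpn : p ≤ n)
    {j : ℕ} (hj : j < p) (hjn : n < j + p) : v.intValuation (n.choose j : ℤ) ≤ exp (-1) := by
  have hp0 : (p : ℤ) ≠ 0 := mod_cast hp.ne_zero
  obtain ⟨t, ht⟩ := hp.dvd_choose hj (by omega) hpn
  rw [ht, Nat.cast_mul, map_mul, v.intValuation_singleton hp0 hv]
  exact mul_le_of_le_one_right' (v.intValuation_le_one _)

theorem newtonWeight_lcal_eq (hp : p.Prime) (hp3 : 3 < p)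
    (hv : v.asIdeal = Ideal.span {(p : ℤ)}) (ha : 1 + 2 * (u + (a : ℤ)) = p) (hap : a ≤ p)
    (hpn : p ≤ n) (hn : n < 2 * p) {j : ℕ} (hjn : j ≤ n) (hj : p ≤ j ∨ p ≤ n - j) :
    newtonWeight (powValuation (v.valuation ℚ) hp.ne_zero) (exp (-1)) (lcal n u) j =
      exp (-1) ^ (((if j < a then p else 0) + if j < a + p ∧ a + p ≤ n then p else 0) + j) := by
  rw [newtonWeight_lcal hp hp3 hv ha hap hpn hn, intValuation_choose_eq_one hp hv hn hjn hj,
    one_pow, one_mul]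

theorem newtonWeight_lcal_le (hp : p.Prime) (hp3 : 3 < p)
    (hv : v.asIdeal = Ideal.span {(p : ℤ)}) (ha : 1 + 2 * (u + (a : ℤ)) = p) (hap : a ≤ p)
    (hpn : p ≤ n) (hn : n < 2 * p) {j m : ℕ}
    (hm : m ≤ ((if j < a then p else 0) + if j < a + p ∧ a + p ≤ n then p else 0) + j) :
    newtonWeight (powValuation (v.valuation ℚ) hp.ne_zero) (exp (-1)) (lcal n u) j ≤
      exp (-1) ^ m := by
  rw [newtonWeight_lcal hp hp3 hv ha hap hpn hn]
  exact (mul_le_of_le_one_left' (pow_le_one' (v.intValuation_le_one _) p)).trans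
    (pow_le_pow_right_of_le_one' exp_neg_one_le_one hm)

theorem hasNewtonEdge_lcal_of_add_le (hp : p.Prime) (hp3 : 3 < p)
    (hv : v.asIdeal = Ideal.span {(p : ℤ)}) (ha : 1 + 2 * (u + (a : ℤ)) = p) (hap : a ≤ p)
    (hn : n < 2 * p) (hapn : a + p ≤ n) :
    HasNewtonEdge (powValuation (v.valuation ℚ) hp.ne_zero) (exp (-1)) (lcal n u) := by
  have hpn : p ≤ n := by omega
  have hweight_a : newtonWeight (powValuation (v.valuation ℚ) hp.ne_zero) (exp (-1))
      (lcal n u) a = exp (-1) ^ (a + p) := by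
    rw [newtonWeight_lcal_eq hp hp3 hv ha hap hpn hn (by omega) (.inr (by omega))]
    congr 1
    split_ifs <;> omega
  refine ⟨a, a + p, by omega, ?_, fun j ↦ ?_⟩
  · rw [hweight_a, newtonWeight_lcal_eq hp hp3 hv ha hap hpn hn hapn (.inl (by omega))]
    congr 1
    split_ifs <;> omega
  · rw [hweight_a]
    refine newtonWeight_lcal_le hp hp3 hv ha hap hpn hn ?_
    split_ifs <;> omega

theorem hasNewtonEdge_lcal_of_lt_add (hp : p.Prime) (hp3 : 3 < p)
    (hv : v.asIdeal = Ideal.span {(p : ℤ)}) (ha : 1 + 2 * (u + (a : ℤ)) = p) (ha0 : 0 < a)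
    (hap : a ≤ p) (hpn : p ≤ n) (hn : n < 2 * p) (hapn : n < a + p) :
    HasNewtonEdge (powValuation (v.valuation ℚ) hp.ne_zero) (exp (-1)) (lcal n u) := by
  have hweight_zero : newtonWeight (powValuation (v.valuation ℚ) hp.ne_zero) (exp (-1))
      (lcal n u) 0 = exp (-1) ^ p := by
    rw [newtonWeight_lcal_eq hp hp3 hv ha hap hpn hn n.zero_le (.inr hpn)]
    congr 1
    split_ifs <;> omega
  refine ⟨0, p, hp.ne_zero.symm, ?_, fun j ↦ ?_⟩
  · rw [hweight_zero, newtonWeight_lcal_eq hp hp3 hv ha hap hpn hn hpn (.inl le_rfl)]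
    congr 1
    split_ifs <;> omega
  rw [hweight_zero]
  by_cases hj : a ≤ j ∧ j < p
  · rw [newtonWeight_lcal hp hp3 hv ha hap hpn hn]
    refine (mul_le_of_le_one_right' (pow_le_one' exp_neg_one_le_one _)).trans ?_
    exact pow_left_mono p (intValuation_choose_le hp hv hpn hj.2 (by omega))
  · refine newtonWeight_lcal_le hp hp3 hv ha hap hpn hn ?_
    split_ifs <;> omega

theorem prime_dvd_natCard_gal_lcal (hsep : (lcal n u).Separable) (hp : p.Prime) (hp3 : 3 < p)
    (hu : 2 * |u + 1| ≤ p) (hpn : p ≤ n) (hn : n < 2 * p) : p ∣ Nat.card (lcal n u).Gal := by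
  have hodd : p % 2 = 1 := hp.eq_two_or_odd.resolve_left (by omega)
  obtain ⟨hu_low, hu_high⟩ : -p ≤ 2 * (u + 1) ∧ 2 * (u + 1) ≤ p := by
    rw [← abs_two, ← abs_mul] at hu
    exact abs_le.1 hu
  obtain ⟨a, ha⟩ : ∃ a : ℕ, 1 + 2 * (u + (a : ℤ)) = p := ⟨((p - 2 * u - 1) / 2).toNat, by omega⟩
  let v := HeightOneSpectrum.ofPrime
    (Ideal.prime_span_singleton_iff.2 (Nat.prime_iff_prime_int.1 hp))
  refine dvd_natCard_gal_of_separable_of_hasNewtonEdge v hsep hp.ne_zero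
    isCoprime_one_right.neg_right ?_
  obtain hapn | hapn := le_or_gt (a + p) n
  · exact hasNewtonEdge_lcal_of_add_le hp hp3 rfl ha (by omega) hn hapn
  · exact hasNewtonEdge_lcal_of_lt_add hp hp3 rfl ha (by omega) (by omega) hpn hn hapn

end Coefficients

section GaloisGroup

theorem alternatingGroup_le_range_galActionHom {F : Type*} [Field F] {f : F[X]}
    (hirr : Irreducible f) (hsep : f.Separable) (E : Type*) [Field E] [Algebra F E]
    [Fact ((f.map (algebraMap F E)).Splits)] {_ : DecidableEq (f.rootSet E)} {p : ℕ} (hp : p.Prime)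
    (hdvd : p ∣ Nat.card f.Gal) (hlt : f.natDegree < 2 * p) (hle : p + 3 ≤ f.natDegree) :
    alternatingGroup (f.rootSet E) ≤ (Gal.galActionHom f E).range := by
  have hcard : Fintype.card (f.rootSet E) = f.natDegree :=
    card_rootSet_eq_natDegree hsep Fact.out
  have htrans : MulAction.IsPretransitive (Gal.galActionHom f E).range (f.rootSet E) := by
    have := Gal.galAction_isPretransitive f E hirr
    refine ⟨fun x y ↦ ?_⟩
    obtain ⟨g, hg⟩ := MulAction.exists_smul_eq f.Gal x y
    exact ⟨⟨_, g, rfl⟩, hg⟩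
  refine alternatingGroup_le_of_isPretransitive_of_prime_dvd_card htrans hp ?_ (hcard ▸ hlt)
    (hcard ▸ hle)
  rwa [← Nat.card_congr (MonoidHom.ofInjective (Gal.galActionHom_injective f E)).toEquiv]

theorem exists_prime_le_and_lt_two_mul_and_add_three_le {p n : ℕ} (hn : 8 ≤ n) (hp : p.Prime)
    (hpn : p + 3 ≤ n) : ∃ q, q.Prime ∧ p ≤ q ∧ n < 2 * q ∧ q + 3 ≤ n := by
  by_cases hlt : n < 2 * p
  · exact ⟨p, hp, le_rfl, hlt, hpn⟩
  · obtain ⟨q, hq, hlow, hhigh⟩ := exists_prime_lt_and_add_three_le_two_mul (n := n / 2) (by omega)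
    exact ⟨q, hq, by omega, by omega, by omega⟩

theorem gal_lcal_contains_alternating_general (u : ℤ) (n : ℕ) (hn : 8 ≤ n)
    (hirr : Irreducible (lcal n u))
    (hex : ∃ p : ℕ, p.Prime ∧ 2 * |u + 1| ≤ (p : ℤ) ∧ p + 3 ≤ n) :
    ∀ σ : Equiv.Perm ((lcal n u).rootSet (lcal n u).SplittingField),
      @Equiv.Perm.sign _ (Classical.decEq _) _ σ = 1 →
      σ ∈ (@Polynomial.Gal.galActionHom ℚ _ (lcal n u) (lcal n u).SplittingField _ _
        ⟨Polynomial.SplittingField.splits (lcal n u)⟩).range := by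
  obtain ⟨p₀, hp₀, hup₀, hp₀n⟩ := hex
  obtain ⟨p, hp, hp₀p, hlt, hle⟩ := exists_prime_le_and_lt_two_mul_and_add_three_le hn hp₀ hp₀n
  have hup : 2 * |u + 1| ≤ (p : ℤ) := by omega
  have hdvd : p ∣ Nat.card (lcal n u).Gal :=
    prime_dvd_natCard_gal_lcal hirr.separable hp (by omega) hup (by omega) hlt
  have : Fact _ := ⟨SplittingField.splits (lcal n u)⟩
  intro σ hσ
  refine alternatingGroup_le_range_galActionHom hirr hirr.separable _ hp hdvd ?_ ?_
    (MonoidHom.mem_ker.2 hσ)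
  all_goals rwa [lcal_natDegree]

end GaloisGroup

/-- If `u < 0`, `v = -u ≥ 2`, `n ≥ max{14, 2v-1}`, `𝓛_n^{(u)}(x)` is irreducible over `ℚ`,
and there is a prime `p` with `2v - 3 < p < n - 2`, then the Galois group of `𝓛_n^{(u)}(x)`
contains the alternating group `A_n`: every even permutation of the roots is realised by
some element of the Galois group. -/
theorem gal_lcal_contains_alternating (u : ℤ) (hu : u < 0) (v : ℤ) (hv : v = -u) (hv2 : 2 ≤ v)
    (n : ℕ) (hn14 : 14 ≤ n) (hn : 2 * v - 1 ≤ (n : ℤ))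
    (hirr : Irreducible (lcal n u))
    (hex : ∃ p : ℕ, p.Prime ∧ 2 * v - 3 < (p : ℤ) ∧ (p : ℤ) < (n : ℤ) - 2) :
    ∀ σ : Equiv.Perm ((lcal n u).rootSet (lcal n u).SplittingField),
      @Equiv.Perm.sign _ (Classical.decEq _) _ σ = 1 →
      σ ∈ (@Polynomial.Gal.galActionHom ℚ _ (lcal n u) (lcal n u).SplittingField _ _
        ⟨Polynomial.SplittingField.splits (lcal n u)⟩).range := by
  obtain ⟨p, hp, hlow, hhigh⟩ := hex
  exact gal_lcal_contains_alternating_general u n (by omega) hirr ⟨p, hp, by grind, by omega⟩
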